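/- The local rule for the generator c covers every cell of every configuration exactly once: for every x ∈ X and every position i ∈ ℤ, there exist a unique triple (u,v,w) ∈ R_c and a unique j ∈ ℤ such that the word uvw (concatenation) occurs in x starting at position j and j + |u| ≤ i < j + |u| + |v|. -/

import Mathlib

/-- A finite word over the alphabet {0,1,2}. -/
abbrev Word : Type := List (Fin 3)

/-- Membership in the vertex shift `X` defined by the matrix [[1,1,0],[1,1,1],[1,1,1]]:
the word 02 never occurs. -/
def inVertexShift (x : ℤ → Fin 3) : Prop :=
  ∀ n : ℤ, x n = 0 → x (n + 1) ≠ 2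

/-- The word `u` occurs in `x` starting at position `j`. -/
def occursAt (u : Word) (x : ℤ → Fin 3) (j : ℤ) : Prop :=
  ∀ k : ℕ, k < u.length → x (j + (k : ℤ)) = u.getD k 0

/-- Embed a binary symbol of `Fin 2` into `Fin 3`. -/
def emb (α : Fin 2) : Fin 3 := α.castLE (by norm_num)

/-- The local rule for the generator c: the set of triples u(v)w. -/
def Rc : Set (Word × Word × Word) :=
  {t | (∃ α β : Fin 2, t = ([emb α, 0], [emb β], [])) ∨
       (∃ α : Fin 2, t = ([1], [emb α], [])) ∨
       t = ([], [2], [2]) ∨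
       t = ([], [2, 0, 0], []) ∨
       t = ([], [2, 0, 1], []) ∨
       (∃ α : Fin 2, t = ([], [2, 1], [emb α])) ∨
       t = ([], [2, 1], [2])}

/-!
Reading a configuration from left to right, a symbol 2 opens a block whose length is dictated by
the next symbol: 1 before 2, 3 before 0 and 2 before 1. The triples with empty left context are
exactly these blocks, and they are disjoint because no block has a 2 after its first symbol. A cell
outside all blocks carries 0 or 1, and the symbol before it is either 1, or a 0 which itself does
not follow a 2; these two alternatives are the left contexts of the remaining triples. The only
word that stands in the way of this is 202, since a block starting with 20 has to end in 0 or 1.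
-/

@[simp]
lemma occursAt_nil (x : ℤ → Fin 3) (j : ℤ) : occursAt [] x j := by
  simp [occursAt]

@[simp]
lemma occursAt_cons (s : Fin 3) (u : Word) (x : ℤ → Fin 3) (j : ℤ) :
    occursAt (s :: u) x j ↔ x j = s ∧ occursAt u x (j + 1) := by
  have add_one_add (k : ℕ) : j + 1 + (k : ℤ) = j + ((k + 1 : ℕ) : ℤ) := by push_cast; ring
  constructor
  · intro h
    refine ⟨by simpa using h 0 (by simp), fun k hk ↦ ?_⟩
    rw [add_one_add, h (k + 1) (by simpa using hk), List.getD_cons_succ]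
  · rintro ⟨h₀, h⟩ (_ | k) hk
    · simpa using h₀
    · rw [← add_one_add, h k (by simpa using hk), List.getD_cons_succ]

lemma exists_emb_iff {p : Fin 3 → Prop} : (∃ α : Fin 2, p (emb α)) ↔ ∃ s, s ≠ 2 ∧ p s := by
  simp [Fin.exists_fin_succ, emb]

/-- The triple with empty left context selected by a symbol 2 followed by `y` and `z`: the block
opened by that 2, with its right context. It belongs to `Rc` unless `y = 0` and `z = 2`. -/
def blockTile (y z : Fin 3) : Word × Word × Word :=
  match y with
  | 0 => ([], [2, 0, z], [])
  | 1 => ([], [2, 1], [z])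
  | 2 => ([], [2], [2])

lemma mem_Rc_iff {t : Word × Word × Word} :
    t ∈ Rc ↔ (∃ y z, (y = 0 → z ≠ 2) ∧ t = blockTile y z) ∨
      (∃ s, s ≠ 2 ∧ t = ([1], [s], [])) ∨
      ∃ r, r ≠ 2 ∧ ∃ s, s ≠ 2 ∧ t = ([r, 0], [s], []) := by
  have blocks : (∃ y z, (y = 0 → z ≠ 2) ∧ t = blockTile y z) ↔
      t = ([], [2], [2]) ∨ t = ([], [2, 0, 0], []) ∨ t = ([], [2, 0, 1], []) ∨
        (∃ α : Fin 2, t = ([], [2, 1], [emb α])) ∨ t = ([], [2, 1], [2]) := by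
    constructor
    · rintro ⟨y, z, hyz, rfl⟩
      fin_cases y <;> fin_cases z <;> simp_all [blockTile, emb]
    · rintro (rfl | rfl | rfl | ⟨α, rfl⟩ | rfl)
      exacts [⟨2, 2, by decide, rfl⟩, ⟨0, 0, by decide, rfl⟩, ⟨0, 1, by decide, rfl⟩,
        ⟨1, emb α, by simp, rfl⟩, ⟨1, 2, by decide, rfl⟩]
  rw [blocks]
  simp only [← exists_emb_iff, Rc, Set.mem_ofPred_eq]
  exact or_comm.trans ((or_congr_left or_comm).trans or_assoc)

lemma occursAt_blockTile_iff {y z : Fin 3} {x : ℤ → Fin 3} {j : ℤ} :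
    occursAt ((blockTile y z).1 ++ (blockTile y z).2.1 ++ (blockTile y z).2.2) x j ↔
      x j = 2 ∧ x (j + 1) = y ∧ (y ≠ 2 → x (j + 2) = z) := by
  have add_one_add_one : j + 1 + 1 = j + 2 := by ring
  match y with
  | 0 | 1 | 2 => simp [blockTile, add_one_add_one]

lemma blockTile_bounds_iff {y z : Fin 3} {i j : ℤ} :
    (j + ((blockTile y z).1.length : ℤ) ≤ i ∧
      i < j + ((blockTile y z).1.length : ℤ) + ((blockTile y z).2.1.length : ℤ)) ↔
      i = j ∨ (i = j + 1 ∧ y ≠ 2) ∨ (i = j + 2 ∧ y = 0) := by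
  match y with
  | 0 | 1 | 2 =>
    simp only [blockTile, List.length_cons, List.length_nil, ne_eq, Fin.reduceEq,
      not_true_eq_false, not_false_eq_true, and_true, and_false, or_false]
    omega

/-- The triple `t` belongs to `Rc` and its word occurs in `x` at position `j`. -/
def IsTileAt (x : ℤ → Fin 3) (j : ℤ) (t : Word × Word × Word) : Prop :=
  t ∈ Rc ∧ occursAt (t.1 ++ t.2.1 ++ t.2.2) x j

lemma isTileAt_iff {x : ℤ → Fin 3} {j : ℤ} {t : Word × Word × Word} :
    IsTileAt x j t ↔
      (x j = 2 ∧ (x (j + 1) = 0 → x (j + 2) ≠ 2) ∧ t = blockTile (x (j + 1)) (x (j + 2))) ∨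
      (x j = 1 ∧ x (j + 1) ≠ 2 ∧ t = ([1], [x (j + 1)], [])) ∨
      (x j ≠ 2 ∧ x (j + 1) = 0 ∧ x (j + 2) ≠ 2 ∧ t = ([x j, 0], [x (j + 2)], [])) := by
  have add_one_add_one : j + 1 + 1 = j + 2 := by ring
  rw [IsTileAt, mem_Rc_iff]
  constructor
  · rintro ⟨⟨y, z, hyz, rfl⟩ | ⟨s, hs, rfl⟩ | ⟨r, hr, s, hs, rfl⟩, h⟩
    · obtain ⟨h₀, rfl, hz⟩ := occursAt_blockTile_iff.mp h
      by_cases hy : x (j + 1) = 2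
      · exact Or.inl ⟨h₀, by simp [hy], by simp [hy, blockTile]⟩
      · obtain rfl := hz hy
        exact Or.inl ⟨h₀, hyz, rfl⟩
    · simp_all
    · simp_all
  · rintro (⟨h₀, hyz, rfl⟩ | ⟨h₀, hs, rfl⟩ | ⟨hr, h₁, hs, rfl⟩)
    · exact ⟨Or.inl ⟨_, _, hyz, rfl⟩, occursAt_blockTile_iff.mpr ⟨h₀, rfl, fun _ ↦ rfl⟩⟩
    · simp_all
    · simp_all

/-- The triple `p.1` occurs in `x` at position `p.2` and its middle word covers the cell `i`. -/
def Covers (x : ℤ → Fin 3) (i : ℤ) (p : (Word × Word × Word) × ℤ) : Prop :=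
  p.1 ∈ Rc ∧ occursAt (p.1.1 ++ p.1.2.1 ++ p.1.2.2) x p.2 ∧
    p.2 + (p.1.1.length : ℤ) ≤ i ∧ i < p.2 + (p.1.1.length : ℤ) + (p.1.2.1.length : ℤ)

lemma covers_iff {x : ℤ → Fin 3} {i j : ℤ} {t : Word × Word × Word} :
    Covers x i (t, j) ↔ IsTileAt x j t ∧
      j + (t.1.length : ℤ) ≤ i ∧ i < j + (t.1.length : ℤ) + (t.2.1.length : ℤ) :=
  and_assoc.symm

/-- The only placed triple that can cover the cell `i` of `x`, read off the symbols at distance at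
most 2 from `i`. -/
def coveringTile (x : ℤ → Fin 3) (i : ℤ) : (Word × Word × Word) × ℤ :=
  if x i = 2 then (blockTile (x (i + 1)) (x (i + 2)), i)
  else if x (i - 1) = 2 then (blockTile (x i) (x (i + 1)), i - 1)
  else if x (i - 1) = 1 then (([1], [x i], []), i - 1)
  else if x (i - 2) = 2 then (blockTile 0 (x i), i - 2)
  else (([x (i - 2), 0], [x i], []), i - 2)

lemma eq_coveringTile_of_covers {x : ℤ → Fin 3} {i : ℤ} {p : (Word × Word × Word) × ℤ}
    (h : Covers x i p) : p = coveringTile x i := by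
  obtain ⟨t, j⟩ := p
  obtain ⟨ht, hij⟩ := covers_iff.mp h
  have add_two_sub_one : j + 2 - 1 = j + 1 := by ring
  have add_one_add_one : j + 1 + 1 = j + 2 := by ring
  rcases isTileAt_iff.mp ht with ⟨h₀, h₂, rfl⟩ | ⟨h₀, h₁, rfl⟩ | ⟨h₀, h₁, h₂, rfl⟩
  · rcases blockTile_bounds_iff.mp hij with rfl | ⟨rfl, h₁⟩ | ⟨rfl, h₁⟩
    · simp [coveringTile, h₀]
    · simp [coveringTile, h₀, h₁, add_one_add_one]
    · simp [coveringTile, h₀, h₁, h₂ h₁, add_two_sub_one]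
  · obtain rfl : i = j + 1 := by
      simp only [List.length_cons, List.length_nil] at hij
      omega
    simp [coveringTile, h₀, h₁]
  · obtain rfl : i = j + 2 := by
      simp only [List.length_cons, List.length_nil] at hij
      omega
    simp [coveringTile, h₀, h₁, h₂, add_two_sub_one]

lemma covers_coveringTile {x : ℤ → Fin 3} (hx : ∀ n, ¬ occursAt [2, 0, 2] x n) (i : ℤ) :
    Covers x i (coveringTile x i) := by
  have block (j : ℤ) (h : x j = 2) : IsTileAt x j (blockTile (x (j + 1)) (x (j + 2))) := by
    refine isTileAt_iff.mpr (.inl ⟨h, fun h₁ h₂ ↦ hx j ?_, rfl⟩)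
    simp [h, h₁, add_assoc, h₂]
  have sub_two_add_one : i - 2 + 1 = i - 1 := by ring
  have sub_one_add_two : i - 1 + 2 = i + 1 := by ring
  unfold coveringTile
  split_ifs with h₀ h₁ h_one h₂
  · exact covers_iff.mpr ⟨block i h₀, blockTile_bounds_iff.mpr (.inl rfl)⟩
  · have := block (i - 1) h₁
    rw [sub_add_cancel, sub_one_add_two] at this
    exact covers_iff.mpr ⟨this, blockTile_bounds_iff.mpr (.inr (.inl ⟨by ring, h₀⟩))⟩
  · refine covers_iff.mpr ⟨isTileAt_iff.mpr (.inr (.inl ?_)), ?_⟩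
    · simp [h₀, h_one]
    · simp
  · have h_zero : x (i - 1) = 0 := by omega
    have := block (i - 2) h₂
    rw [sub_add_cancel, sub_two_add_one, h_zero] at this
    exact covers_iff.mpr ⟨this, blockTile_bounds_iff.mpr (.inr (.inr ⟨by ring, rfl⟩))⟩
  · have h_zero : x (i - 1) = 0 := by omega
    refine covers_iff.mpr ⟨isTileAt_iff.mpr (.inr (.inr ?_)), ?_⟩
    · simp [h₀, h₂, sub_two_add_one, h_zero]
    · simp

theorem Rc_partitions_general (x : ℤ → Fin 3) (hx : ∀ n, ¬ occursAt [2, 0, 2] x n) (i : ℤ) :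
    ∃! p, Covers x i p :=
  ⟨coveringTile x i, covers_coveringTile hx i, fun _ h ↦ eq_coveringTile_of_covers h⟩

/-- The local rule for c covers every cell of every configuration exactly once. -/
theorem Rc_partitions : ∀ x : ℤ → Fin 3, inVertexShift x → ∀ i : ℤ,
    ∃! p : (Word × Word × Word) × ℤ,
      p.1 ∈ Rc ∧ occursAt (p.1.1 ++ p.1.2.1 ++ p.1.2.2) x p.2 ∧
      p.2 + (p.1.1.length : ℤ) ≤ i ∧ i < p.2 + (p.1.1.length : ℤ) + (p.1.2.1.length : ℤ) :=
  fun x hx ↦ Rc_partitions_general x fun n h ↦ by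
    simp only [occursAt_cons] at h
    exact hx (n + 1) h.2.1 h.2.2.1
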